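/- Let d ≥ 1, β > 0, 𝒟 > 0, c₀ ∈ ℝ, and let 𝒞₀(x) = c₀ − (𝒟/2)|x|². For r, q ∈ ℝ^d and ζ > 0 set 𝒱_r(ζ, q) = (2π)^{−d} ∫_{ℝ^d} e^{−i q·u} exp( β ∫₀^ζ [𝒞₀(u/2 + rζ') + 𝒞₀(u/2 − rζ') − 2𝒞₀(0)] dζ' ) du. Then for every q ∈ ℝ^d and every r ∈ ℝ^d: 𝒱_0(1, q) + 𝒱_r(1, q) = (1 + e^{−β𝒟|r|²/3}) · 𝒱_0(1, q). In particular, the value at r = 0 equals 2 𝒱_0(1, q), twice the limiting value as |r| → ∞, and the profile in r is a Gaussian cone of width √3/√(β𝒟). -/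

import Mathlib

open MeasureTheory Real Filter
open scoped RealInnerProductSpace Topology

/-- The quadratic autocorrelation function `𝒞₀(x) = c₀ − (𝒟/2)|x|²`. -/
noncomputable def quadCorr {d : ℕ} (c₀ D : ℝ) (x : EuclideanSpace ℝ (Fin d)) : ℝ :=
  c₀ - D / 2 * ‖x‖ ^ 2

/-- Formula (4.10): `𝒱_r(ζ,q) = (2π)^{−d} ∫ e^{−iq·u}
exp(β ∫₀^ζ [𝒞₀(u/2 + rζ') + 𝒞₀(u/2 − rζ') − 2𝒞₀(0)] dζ') du`. -/
noncomputable def Vrefl {d : ℕ} (β c₀ D : ℝ) (r : EuclideanSpace ℝ (Fin d)) (ζ : ℝ)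
    (q : EuclideanSpace ℝ (Fin d)) : ℂ :=
  (((2 * π) ^ (-(d : ℝ)) : ℝ) : ℂ) *
    ∫ u : EuclideanSpace ℝ (Fin d),
      Complex.exp
        (-(Complex.I * ((⟪q, u⟫ : ℝ) : ℂ))
          + ((β * ∫ ζ' in (0 : ℝ)..ζ,
              (quadCorr c₀ D ((2 : ℝ)⁻¹ • u + ζ' • r)
                + quadCorr c₀ D ((2 : ℝ)⁻¹ • u - ζ' • r)
                - 2 * quadCorr c₀ D (0 : EuclideanSpace ℝ (Fin d))) : ℝ) : ℂ))

/-! By the parallelogram identity the exponent of `𝒱_r(ζ, q)` splits into a term in `u` and a term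
in `r`, without cross terms. The `r`-term leaves the Fourier integral as the factor
`exp (-β𝒟ζ³|r|²/3)`, the cube arising from `∫₀^ζ ζ'² dζ'`; what remains is the Fourier transform of
the Gaussian `exp (-β𝒟ζ|u|²/4)`. -/

section QuadraticMedium

variable {d : ℕ} (β c₀ D : ℝ)

lemma quadCorr_add_add_quadCorr_sub (x y : EuclideanSpace ℝ (Fin d)) :
    quadCorr c₀ D (x + y) + quadCorr c₀ D (x - y)
        - 2 * quadCorr c₀ D (0 : EuclideanSpace ℝ (Fin d)) =
      -D * (‖x‖ ^ 2 + ‖y‖ ^ 2) := by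
  simp only [quadCorr, norm_zero]
  linear_combination (-D / 2) * parallelogram_law_with_norm ℝ x y

lemma integral_quadCorr_add_add_quadCorr_sub (x r : EuclideanSpace ℝ (Fin d)) (ζ : ℝ) :
    ∫ t in (0 : ℝ)..ζ, (quadCorr c₀ D (x + t • r) + quadCorr c₀ D (x - t • r)
        - 2 * quadCorr c₀ D (0 : EuclideanSpace ℝ (Fin d))) =
      -D * (ζ * ‖x‖ ^ 2 + ζ ^ 3 / 3 * ‖r‖ ^ 2) := by
  have integral_sq : ∫ t in (0 : ℝ)..ζ, t ^ 2 * ‖r‖ ^ 2 = ζ ^ 3 / 3 * ‖r‖ ^ 2 := by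
    rw [intervalIntegral.integral_mul_const, integral_pow]
    norm_num
  simp only [quadCorr_add_add_quadCorr_sub, norm_smul, norm_eq_abs, mul_pow, sq_abs]
  rw [intervalIntegral.integral_const_mul,
    intervalIntegral.integral_add intervalIntegrable_const
      (Continuous.intervalIntegrable (by fun_prop) _ _),
    integral_sq, intervalIntegral.integral_const, sub_zero, smul_eq_mul]

lemma Vrefl_eq_exp_mul_Vrefl_zero (r : EuclideanSpace ℝ (Fin d)) (ζ : ℝ)
    (q : EuclideanSpace ℝ (Fin d)) :
    Vrefl β c₀ D r ζ q = (Real.exp (-β * D * ζ ^ 3 * ‖r‖ ^ 2 / 3) : ℂ) *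
      Vrefl β c₀ D (0 : EuclideanSpace ℝ (Fin d)) ζ q := by
  simp only [Vrefl, integral_quadCorr_add_add_quadCorr_sub, norm_zero]
  rw [mul_left_comm]
  congr 1
  rw [← integral_const_mul]
  congr with u
  rw [Complex.ofReal_exp, ← Complex.exp_add]
  push_cast
  ring_nf

lemma Vrefl_zero_add_Vrefl (r : EuclideanSpace ℝ (Fin d)) (ζ : ℝ)
    (q : EuclideanSpace ℝ (Fin d)) :
    Vrefl β c₀ D (0 : EuclideanSpace ℝ (Fin d)) ζ q + Vrefl β c₀ D r ζ q =
      ((1 + Real.exp (-β * D * ζ ^ 3 * ‖r‖ ^ 2 / 3) : ℝ) : ℂ) *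
        Vrefl β c₀ D (0 : EuclideanSpace ℝ (Fin d)) ζ q := by
  rw [Vrefl_eq_exp_mul_Vrefl_zero β c₀ D r, Complex.ofReal_add, Complex.ofReal_one, add_mul,
    one_mul]

end QuadraticMedium

lemma tendsto_exp_neg_mul_norm_sq_cobounded {E : Type*} [SeminormedAddGroup E] {a : ℝ}
    (ha : 0 < a) :
    Tendsto (fun x : E => Real.exp (-(a * ‖x‖ ^ 2))) (Bornology.cobounded E) (𝓝 0) :=
  tendsto_exp_neg_atTop_nhds_zero.comp <|
    ((tendsto_pow_atTop two_ne_zero).comp tendsto_norm_cobounded_atTop).const_mul_atTop ha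

lemma tendsto_Vrefl_cobounded {d : ℕ} {β D ζ : ℝ} (c₀ : ℝ) (h : 0 < β * D * ζ)
    (q : EuclideanSpace ℝ (Fin d)) :
    Tendsto (fun r => Vrefl β c₀ D r ζ q)
      (Bornology.cobounded (EuclideanSpace ℝ (Fin d))) (𝓝 0) := by
  have decay_rate_pos : 0 < β * D * ζ ^ 3 / 3 := by
    have hζ : ζ ≠ 0 := right_ne_zero_of_mul h.ne'
    calc 0 < β * D * ζ * ζ ^ 2 / 3 := by positivity
      _ = β * D * ζ ^ 3 / 3 := by ring
  have factor_tendsto : Tendsto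
      (fun r : EuclideanSpace ℝ (Fin d) => Real.exp (-β * D * ζ ^ 3 * ‖r‖ ^ 2 / 3))
      (Bornology.cobounded _) (𝓝 0) :=
    (tendsto_exp_neg_mul_norm_sq_cobounded decay_rate_pos).congr fun r => by ring_nf
  simpa only [← Vrefl_eq_exp_mul_Vrefl_zero, Complex.ofReal_zero, zero_mul] using
    factor_tendsto.ofReal.mul_const (Vrefl β c₀ D (0 : EuclideanSpace ℝ (Fin d)) ζ q)

theorem enhanced_backscattering_cone_general {d : ℕ} {β D ζ : ℝ} (c₀ : ℝ) (h : 0 < β * D * ζ)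
    (q : EuclideanSpace ℝ (Fin d)) :
    (∀ r : EuclideanSpace ℝ (Fin d),
      Vrefl β c₀ D (0 : EuclideanSpace ℝ (Fin d)) ζ q + Vrefl β c₀ D r ζ q =
        ((1 + Real.exp (-β * D * ζ ^ 3 * ‖r‖ ^ 2 / 3) : ℝ) : ℂ) *
          Vrefl β c₀ D (0 : EuclideanSpace ℝ (Fin d)) ζ q) ∧
    Tendsto (fun r : EuclideanSpace ℝ (Fin d) =>
        Vrefl β c₀ D (0 : EuclideanSpace ℝ (Fin d)) ζ q + Vrefl β c₀ D r ζ q)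
      (Bornology.cobounded (EuclideanSpace ℝ (Fin d)))
      (𝓝 (Vrefl β c₀ D (0 : EuclideanSpace ℝ (Fin d)) ζ q)) :=
  ⟨fun r => Vrefl_zero_add_Vrefl β c₀ D r ζ q,
    by simpa only [add_zero] using (tendsto_Vrefl_cobounded c₀ h q).const_add _⟩

/-- enhanced backscattering cone, Section 5.3 and (5.13).
With quadratic medium autocorrelation `𝒞₀(x) = c₀ − (𝒟/2)|x|²`, for every `q` and `r`,
`𝒱_0(1,q) + 𝒱_r(1,q) = (1 + e^{−β𝒟|r|²/3}) 𝒱_0(1,q)`: the profile in `r` is a Gaussian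
cone of width `√3/√(β𝒟)`; in particular at `r = 0` the value is `2𝒱_0(1,q)`, twice the
limiting value as `|r| → ∞` (enhancement factor exactly `2`). -/
theorem enhanced_backscattering_cone (d : ℕ) (hd : 1 ≤ d) (β D c₀ : ℝ)
    (hβ : 0 < β) (hD : 0 < D) :
    (∀ (q r : EuclideanSpace ℝ (Fin d)),
      Vrefl β c₀ D (0 : EuclideanSpace ℝ (Fin d)) 1 q + Vrefl β c₀ D r 1 q =
        ((1 + Real.exp (-β * D * ‖r‖ ^ 2 / 3) : ℝ) : ℂ) *
          Vrefl β c₀ D (0 : EuclideanSpace ℝ (Fin d)) 1 q) ∧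
    (∀ q : EuclideanSpace ℝ (Fin d),
      Vrefl β c₀ D (0 : EuclideanSpace ℝ (Fin d)) 1 q
          + Vrefl β c₀ D (0 : EuclideanSpace ℝ (Fin d)) 1 q =
        2 * Vrefl β c₀ D (0 : EuclideanSpace ℝ (Fin d)) 1 q) ∧
    (∀ q : EuclideanSpace ℝ (Fin d),
      Tendsto (fun r : EuclideanSpace ℝ (Fin d) =>
          Vrefl β c₀ D (0 : EuclideanSpace ℝ (Fin d)) 1 q + Vrefl β c₀ D r 1 q)
        (Bornology.cobounded (EuclideanSpace ℝ (Fin d)))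
        (𝓝 (Vrefl β c₀ D (0 : EuclideanSpace ℝ (Fin d)) 1 q))) := by
  have general := enhanced_backscattering_cone_general (d := d) (ζ := 1) c₀
    (mul_pos (mul_pos hβ hD) one_pos)
  exact ⟨fun q r => by simpa only [one_pow, mul_one] using (general q).1 r,
    fun q => (two_mul _).symm, fun q => (general q).2⟩
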